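/- arXiv:2406.18428 — 4 statements merged into one kernel-verified Lean document; each statement's English description precedes it below -/
import Mathlib

section
/- For every integer n ≥ 1, the set M_n = {v − w : v, w ∈ ℝ^n have all coordinates nonnegative and |v|² + (|w| + √2)² ≤ 4} is a convex body in ℝ^n, i.e., M_n is convex, compact, and has nonempty interior. -/
/-!
`Mbody n` is the image under the linear map `(v, w) ↦ v - w` of the set `Mpairs n` of admissible
pairs. That set is convex, because `(v, w) ↦ |v|² + (|w| + √2)²` is a convex function and the
coordinatewise constraints are convex, and it is closed and bounded, hence compact; both properties
pass to the image. The origin is an interior point: a vector `x` of norm at most `1/4` is the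
difference of its positive and negative parts, whose norms are at most `|x|`, and
`(1/4)² + (1/4 + √2)² ≤ 4`.
-/

open scoped RealInnerProductSpace ENNReal
open MeasureTheory

noncomputable section

/-- The body `M_n` from the paper: the set of differences `v - w` where `v, w ∈ ℝⁿ` have all
coordinates nonnegative and `|v|² + (|w| + √2)² ≤ 4`. -/
def Mbody (n : ℕ) : Set (EuclideanSpace ℝ (Fin n)) :=
  {x | ∃ v w : EuclideanSpace ℝ (Fin n), (∀ i, 0 ≤ v i) ∧ (∀ i, 0 ≤ w i) ∧
    ‖v‖ ^ 2 + (‖w‖ + Real.sqrt 2) ^ 2 ≤ 4 ∧ x = v - w}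

/-- The set of pairs `(v, w)` whose differences form `Mbody n`. -/
def Mpairs (n : ℕ) : Set (EuclideanSpace ℝ (Fin n) × EuclideanSpace ℝ (Fin n)) :=
  {p | (∀ i, 0 ≤ p.1 i) ∧ (∀ i, 0 ≤ p.2 i) ∧ ‖p.1‖ ^ 2 + (‖p.2‖ + Real.sqrt 2) ^ 2 ≤ 4}

lemma Mbody_eq_image (n : ℕ) : Mbody n = (fun p => p.1 - p.2) '' Mpairs n := by
  ext x
  constructor
  · rintro ⟨v, w, hv, hw, h, rfl⟩
    exact ⟨(v, w), ⟨hv, hw, h⟩, rfl⟩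
  · rintro ⟨⟨v, w⟩, ⟨hv, hw, h⟩, rfl⟩
    exact ⟨v, w, hv, hw, h, rfl⟩

lemma convex_Mpairs (n : ℕ) : Convex ℝ (Mpairs n) := by
  rintro ⟨v, w⟩ ⟨hv, hw, h⟩ ⟨v', w'⟩ ⟨hv', hw', h'⟩ a b ha hb hab
  dsimp only at hv hw h hv' hw' h'
  refine ⟨fun i => ?_, fun i => ?_, ?_⟩
  · have := hv i
    have := hv' i
    simp only [Prod.smul_mk, Prod.mk_add_mk, PiLp.add_apply, PiLp.smul_apply, smul_eq_mul]
    positivity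
  · have := hw i
    have := hw' i
    simp only [Prod.smul_mk, Prod.mk_add_mk, PiLp.add_apply, PiLp.smul_apply, smul_eq_mul]
    positivity
  · simp only [Prod.smul_mk, Prod.mk_add_mk]
    have norm_comb (x y : EuclideanSpace ℝ (Fin n)) : ‖a • x + b • y‖ ≤ a * ‖x‖ + b * ‖y‖ := by
      refine (norm_add_le _ _).trans_eq ?_
      rw [norm_smul, norm_smul, Real.norm_of_nonneg ha, Real.norm_of_nonneg hb]
    have sq_comb (s t : ℝ) : (a * s + b * t) ^ 2 ≤ a * s ^ 2 + b * t ^ 2 := by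
      simpa using (Even.convexOn_pow (𝕜 := ℝ) (n := 2) even_two).2
        (Set.mem_univ s) (Set.mem_univ t) ha hb hab
    calc ‖a • v + b • v'‖ ^ 2 + (‖a • w + b • w'‖ + Real.sqrt 2) ^ 2
        ≤ (a * ‖v‖ + b * ‖v'‖) ^ 2 + (a * ‖w‖ + b * ‖w'‖ + Real.sqrt 2) ^ 2 := by
          gcongr <;> exact norm_comb _ _
      _ = (a * ‖v‖ + b * ‖v'‖) ^ 2
            + (a * (‖w‖ + Real.sqrt 2) + b * (‖w'‖ + Real.sqrt 2)) ^ 2 := by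
          congr 2
          linear_combination (-Real.sqrt 2) * hab
      _ ≤ (a * ‖v‖ ^ 2 + b * ‖v'‖ ^ 2)
            + (a * (‖w‖ + Real.sqrt 2) ^ 2 + b * (‖w'‖ + Real.sqrt 2) ^ 2) :=
          add_le_add (sq_comb _ _) (sq_comb _ _)
      _ = a * (‖v‖ ^ 2 + (‖w‖ + Real.sqrt 2) ^ 2)
            + b * (‖v'‖ ^ 2 + (‖w'‖ + Real.sqrt 2) ^ 2) := by ring
      _ ≤ a * 4 + b * 4 := by gcongr
      _ = 4 := by rw [← add_mul, hab, one_mul]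

lemma isCompact_Mpairs (n : ℕ) : IsCompact (Mpairs n) := by
  refine Metric.isCompact_of_isClosed_isBounded ?_ ?_
  · simp only [Mpairs, Set.ofPred_and, Set.ofPred_forall]
    refine IsClosed.inter ?_ (IsClosed.inter ?_ ?_)
    · exact isClosed_iInter fun i => isClosed_le (by fun_prop) (by fun_prop)
    · exact isClosed_iInter fun i => isClosed_le (by fun_prop) (by fun_prop)
    · exact isClosed_le (by fun_prop) (by fun_prop)
  · refine (Metric.isBounded_closedBall (x := 0) (r := 2)).subset ?_
    rintro ⟨v, w⟩ ⟨-, -, h⟩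
    dsimp only at h
    have h2 : 0 ≤ Real.sqrt 2 := Real.sqrt_nonneg 2
    have hw0 := norm_nonneg w
    rw [mem_closedBall_zero_iff, Prod.norm_mk, max_le_iff]
    constructor
    · exact le_of_sq_le_sq (by nlinarith [sq_nonneg (‖w‖ + Real.sqrt 2)]) (by norm_num)
    · exact le_of_sq_le_sq (by nlinarith [sq_nonneg ‖v‖, mul_nonneg hw0 h2]) (by norm_num)

lemma closedBall_subset_Mbody (n : ℕ) :
    Metric.closedBall (0 : EuclideanSpace ℝ (Fin n)) (1 / 4) ⊆ Mbody n := by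
  intro x hx
  rw [mem_closedBall_zero_iff] at hx
  have norm_le (y : EuclideanSpace ℝ (Fin n)) (hy : ∀ i, |y i| ≤ |x i|) : ‖y‖ ≤ 1 / 4 := by
    refine le_trans ?_ hx
    rw [EuclideanSpace.norm_eq, EuclideanSpace.norm_eq]
    gcongr with i
    exact hy i
  have hv : ‖WithLp.toLp 2 (fun i => max (x i) 0)‖ ≤ 1 / 4 :=
    norm_le _ fun i => by
      rw [abs_of_nonneg (le_max_right _ _)]
      exact max_le (le_abs_self _) (abs_nonneg _)
  have hw : ‖WithLp.toLp 2 (fun i => max (-x i) 0)‖ ≤ 1 / 4 :=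
    norm_le _ fun i => by
      rw [abs_of_nonneg (le_max_right _ _)]
      exact max_le (neg_le_abs _) (abs_nonneg _)
  refine ⟨WithLp.toLp 2 (fun i => max (x i) 0), WithLp.toLp 2 (fun i => max (-x i) 0),
    fun i => le_max_right _ _, fun i => le_max_right _ _, ?_, ?_⟩
  · have h2 : Real.sqrt 2 ≤ 3 / 2 := by
      rw [Real.sqrt_le_left (by norm_num)]
      norm_num
    calc _ ≤ (1 / 4 : ℝ) ^ 2 + (1 / 4 + 3 / 2) ^ 2 := by gcongr
      _ ≤ 4 := by norm_num
  · ext i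
    simp only [PiLp.sub_apply]
    rcases le_total (x i) 0 with h | h
    · simp [h]
    · simp [h]

/-- For every `n ≥ 1`, `M_n` is a convex body in `ℝⁿ`:
convex, compact, with nonempty interior. -/
theorem Mbody_isConvexBody (n : ℕ) (hn : 1 ≤ n) :
    Convex ℝ (Mbody n) ∧ IsCompact (Mbody n) ∧ (interior (Mbody n)).Nonempty := by
  refine ⟨?_, ?_, 0, ?_⟩
  · rw [Mbody_eq_image]
    exact (convex_Mpairs n).is_linear_image IsLinearMap.isLinearMap_sub
  · rw [Mbody_eq_image]
    exact (isCompact_Mpairs n).image (by fun_prop)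
  · exact mem_interior_iff_mem_nhds.2
      (Filter.mem_of_superset (Metric.closedBall_mem_nhds _ (by norm_num))
        (closedBall_subset_Mbody n))
end
end

section
/- For every integer n ≥ 1, the body M_n has constant width 2: for every unit vector u ∈ ℝ^n, (sup_{x ∈ M_n} ⟨x, u⟩) − (inf_{x ∈ M_n} ⟨x, u⟩) = 2. -/
/-!
Write `u = u⁺ - u⁻` for the decomposition of the unit vector `u` into coordinatewise positive and
negative parts, and put `a = |u⁺|`, `b = |u⁻|`, so that `a² + b² = 1`. For `v, w ≥ 0` one has
`⟪v - w, u⟫ ≤ |v| a + |w| b`, so computing the support function `h(u) = sup ⟪x, u⟫` of `M_n`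
reduces to maximizing `p a + q b` over `p, q ≥ 0` with `p² + (q + √2)² ≤ 4`:

* if `a ≤ b`, Cauchy–Schwarz gives `h(u) = 2 - √2 b`, attained at `p = 2a`, `q = 2b - √2`
  (`isGreatest_of_le_neg`);
* if `b ≤ a`, the constraint gives `p + q ≤ √2`, so `h(u) = √2 a`, attained at `p = √2`, `q = 0`
  (`isGreatest_of_neg_le`).

Passing from `u` to `-u` swaps `a` and `b`, so in each case the width `h(u) + h(-u)` is
`(2 - √2 m) + √2 m = 2` with `m = max a b`.
-/

open scoped RealInnerProductSpace ENNReal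
open MeasureTheory

noncomputable section

/-- The coordinatewise positive part `u⁺` of `u`; the negative part is `posPt (-u)`. -/
def posPt {n : ℕ} (u : EuclideanSpace ℝ (Fin n)) : EuclideanSpace ℝ (Fin n) :=
  WithLp.toLp 2 (fun i => max (u i) 0)

lemma posPt_nonneg {n : ℕ} (u : EuclideanSpace ℝ (Fin n)) (i : Fin n) : 0 ≤ posPt u i :=
  le_max_right _ _

lemma posPt_sub_neg {n : ℕ} (u : EuclideanSpace ℝ (Fin n)) : posPt u - posPt (-u) = u := by
  ext i
  simp only [posPt, PiLp.sub_apply, PiLp.neg_apply]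
  rcases le_total (u i) 0 with h | h
  · rw [max_eq_right h, max_eq_left (by linarith)]; ring
  · rw [max_eq_left h, max_eq_right (by linarith)]; ring

lemma inner_posPt_neg {n : ℕ} (u : EuclideanSpace ℝ (Fin n)) : ⟪posPt u, posPt (-u)⟫ = 0 := by
  rw [PiLp.inner_apply]
  refine Finset.sum_eq_zero fun i _ => ?_
  simp only [posPt, PiLp.neg_apply]
  rcases le_total (u i) 0 with h | h
  · rw [max_eq_right h]; simp
  · rw [max_eq_right (a := -u i) (by linarith)]; simp

lemma inner_posPt_self {n : ℕ} (u : EuclideanSpace ℝ (Fin n)) : ⟪posPt u, u⟫ = ‖posPt u‖ ^ 2 := by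
  rw [← sub_zero (‖posPt u‖ ^ 2), ← inner_posPt_neg u,
    ← real_inner_self_eq_norm_sq, ← inner_sub_right, posPt_sub_neg]

lemma norm_posPt_sq_add {n : ℕ} (u : EuclideanSpace ℝ (Fin n)) :
    ‖posPt u‖ ^ 2 + ‖posPt (-u)‖ ^ 2 = ‖u‖ ^ 2 := by
  have h1 := inner_posPt_self u
  have h2 := inner_posPt_self (-u)
  rw [inner_neg_right] at h2
  have h3 : ⟪posPt u - posPt (-u), u⟫ = ‖u‖ ^ 2 := by
    rw [posPt_sub_neg, real_inner_self_eq_norm_sq]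
  rw [inner_sub_left] at h3
  linarith

lemma inner_nonneg_of_coord {n : ℕ} {v w : EuclideanSpace ℝ (Fin n)} (hv : ∀ i, 0 ≤ v i)
    (hw : ∀ i, 0 ≤ w i) : 0 ≤ ⟪v, w⟫ := by
  rw [PiLp.inner_apply]
  exact Finset.sum_nonneg fun i _ => mul_nonneg (hw i) (hv i)

/-- A nonnegative vector pairs with `u` at most as well as it does with `u⁺`. -/
lemma inner_le_norm_mul_posPt {n : ℕ} {v : EuclideanSpace ℝ (Fin n)} (hv : ∀ i, 0 ≤ v i)
    (u : EuclideanSpace ℝ (Fin n)) : ⟪v, u⟫ ≤ ‖v‖ * ‖posPt u‖ := by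
  have h1 := inner_nonneg_of_coord hv (posPt_nonneg (-u))
  have h2 := real_inner_le_norm v (posPt u)
  have h3 : ⟪v, u⟫ = ⟪v, posPt u⟫ - ⟪v, posPt (-u)⟫ := by
    rw [← inner_sub_right, posPt_sub_neg]
  linarith

lemma inner_sub_le {n : ℕ} {v w : EuclideanSpace ℝ (Fin n)} (hv : ∀ i, 0 ≤ v i)
    (hw : ∀ i, 0 ≤ w i) (u : EuclideanSpace ℝ (Fin n)) :
    ⟪v - w, u⟫ ≤ ‖v‖ * ‖posPt u‖ + ‖w‖ * ‖posPt (-u)‖ := by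
  have h1 := inner_le_norm_mul_posPt hv u
  have h2 := inner_le_norm_mul_posPt hw (-u)
  rw [inner_neg_right] at h2
  rw [inner_sub_left]
  linarith

/-- The support function of `M_n` at `u` when `|u⁺| ≤ |u⁻|`. -/
lemma isGreatest_of_le_neg {n : ℕ} (u : EuclideanSpace ℝ (Fin n)) (hu : ‖u‖ = 1)
    (h : ‖posPt u‖ ≤ ‖posPt (-u)‖) :
    IsGreatest ((fun x => ⟪x, u⟫) '' Mbody n) (2 - √2 * ‖posPt (-u)‖) := by
  have hab := norm_posPt_sq_add u
  have ha := inner_posPt_self u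
  have hb := inner_posPt_self (-u)
  rw [inner_neg_right] at hb
  rw [hu] at hab
  have ha0 := norm_nonneg (posPt u)
  have hs : √2 ^ 2 = 2 := Real.sq_sqrt (by norm_num)
  have hs0 := Real.sqrt_nonneg 2
  have hb1 : √2 ≤ 2 * ‖posPt (-u)‖ := by
    refine abs_le_of_sq_le_sq' ?_ (by positivity) |>.2
    nlinarith
  have hbpos : 0 < ‖posPt (-u)‖ := by
    have : 0 < √2 := by positivity
    linarith
  constructor
  -- The coefficient of `u⁻` makes `|w| = 2b - √2`, so the constraint holds with equality.
  · have hc : 0 ≤ 2 - √2 / ‖posPt (-u)‖ := by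
      rw [sub_nonneg, div_le_iff₀ hbpos]; exact hb1
    refine ⟨_, ⟨(2 : ℝ) • posPt u, (2 - √2 / ‖posPt (-u)‖) • posPt (-u), fun i => ?_, fun i => ?_,
      ?_, rfl⟩, ?_⟩
    · exact mul_nonneg zero_le_two (posPt_nonneg u i)
    · exact mul_nonneg hc (posPt_nonneg (-u) i)
    · rw [norm_smul, norm_smul, Real.norm_of_nonneg hc, Real.norm_of_nonneg zero_le_two]
      have : (2 - √2 / ‖posPt (-u)‖) * ‖posPt (-u)‖ + √2 = 2 * ‖posPt (-u)‖ := by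
        field_simp; ring
      rw [this]
      nlinarith
    · simp only [inner_sub_left, real_inner_smul_left]
      rw [ha, ← neg_neg ⟪posPt (-u), u⟫, hb]
      have : √2 / ‖posPt (-u)‖ * ‖posPt (-u)‖ ^ 2 = √2 * ‖posPt (-u)‖ := by field_simp
      linarith
  · rintro _ ⟨_, ⟨v, w, hv, hw, hvw, rfl⟩, rfl⟩
    refine (inner_sub_le hv hw u).trans ?_
    -- Cauchy–Schwarz in the plane, in the form `2 (x·y) ≤ |x|² / 2 + 2 |y|²` with
    -- `x = (|v|, |w| + √2)` and `y = (a, b)`.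
    nlinarith [sq_nonneg (‖v‖ - 2 * ‖posPt u‖), sq_nonneg (‖w‖ + √2 - 2 * ‖posPt (-u)‖)]

/-- The support function of `M_n` at `u` when `|u⁻| ≤ |u⁺|`. -/
lemma isGreatest_of_neg_le {n : ℕ} (u : EuclideanSpace ℝ (Fin n)) (hu : ‖u‖ = 1)
    (h : ‖posPt (-u)‖ ≤ ‖posPt u‖) :
    IsGreatest ((fun x => ⟪x, u⟫) '' Mbody n) (√2 * ‖posPt u‖) := by
  have hab := norm_posPt_sq_add u
  have ha := inner_posPt_self u
  rw [hu] at hab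
  have hb0 := norm_nonneg (posPt (-u))
  have hs : √2 ^ 2 = 2 := Real.sq_sqrt (by norm_num)
  have hs0 := Real.sqrt_nonneg 2
  have hapos : 0 < ‖posPt u‖ := by
    by_contra! h0
    nlinarith
  constructor
  · refine ⟨_, ⟨(√2 / ‖posPt u‖) • posPt u, 0, fun i => ?_, fun i => le_rfl, ?_, rfl⟩, ?_⟩
    · exact mul_nonneg (by positivity) (posPt_nonneg u i)
    · rw [norm_smul, Real.norm_of_nonneg (by positivity), div_mul_cancel₀ _ hapos.ne', norm_zero,
        zero_add, hs]
      norm_num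
    · simp only [sub_zero, real_inner_smul_left]
      rw [ha]
      field_simp
  · rintro _ ⟨_, ⟨v, w, hv, hw, hvw, rfl⟩, rfl⟩
    refine (inner_sub_le hv hw u).trans ?_
    have hv0 := norm_nonneg v
    have hw0 := norm_nonneg w
    have hq : ‖w‖ ≤ √2 := by nlinarith
    have hpq : ‖v‖ ≤ √2 - ‖w‖ := by
      refine abs_le_of_sq_le_sq' ?_ (by linarith) |>.2
      nlinarith
    nlinarith [mul_le_mul_of_nonneg_left h hw0, mul_le_mul_of_nonneg_right hpq hapos.le]

lemma isLeast_of_isGreatest_neg {n : ℕ} (u : EuclideanSpace ℝ (Fin n)) {c : ℝ}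
    (h : IsGreatest ((fun x => ⟪x, -u⟫) '' Mbody n) c) :
    IsLeast ((fun x => ⟪x, u⟫) '' Mbody n) (-c) := by
  obtain ⟨⟨x, hx, hxc⟩, hub⟩ := h
  refine ⟨⟨x, hx, ?_⟩, ?_⟩
  · simp only [inner_neg_right] at hxc
    simp only
    linarith
  · rintro _ ⟨y, hy, rfl⟩
    have := hub ⟨y, hy, rfl⟩
    simp only [inner_neg_right] at this
    simp only
    linarith

/-- For every `n ≥ 1`, `M_n` has constant width `2`: for every unit vector `u`,
`sup_{x ∈ M_n} ⟨x,u⟩ - inf_{x ∈ M_n} ⟨x,u⟩ = 2`. -/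
theorem Mbody_constantWidth_two (n : ℕ) (hn : 1 ≤ n)
    (u : EuclideanSpace ℝ (Fin n)) (hu : ‖u‖ = 1) :
    sSup ((fun x => ⟪x, u⟫) '' Mbody n) - sInf ((fun x => ⟪x, u⟫) '' Mbody n) = 2 := by
  rcases le_total ‖posPt u‖ ‖posPt (-u)‖ with h | h
  · have h1 := isGreatest_of_le_neg u hu h
    have h2 := isLeast_of_isGreatest_neg u (isGreatest_of_neg_le (-u) (by rwa [norm_neg])
      (by rwa [neg_neg]))
    rw [h1.csSup_eq, h2.csInf_eq]
    ring
  · have h1 := isGreatest_of_neg_le u hu h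
    have h2 := isLeast_of_isGreatest_neg u (isGreatest_of_le_neg (-u) (by rwa [norm_neg])
      (by rwa [neg_neg]))
    rw [h1.csSup_eq, h2.csInf_eq, neg_neg]
    ring
end
end

section
/- The following integral identity holds: ∫₀^{1/2} ∫_{√((1−b²)/3)}^{√(1−3b²)} ( 3/4 − (1/2)(a + c/√2)² − (a + c/√2 − 1)² ) / √(1 − a² − b²) da db = (π√6 − 3√2)/12 − arctan(√2/5), where c = √(1 − a² − b²). -/
/-!
Write `c = √(1 - a² - b²)`. Expanding the square and using `c² = 1 - a² - b²`, the integrand is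
`(-1/4 + 2a - (3/2)a²)/c + √2 - (3√2/2)a - (3/4)c`, which has in `a` the elementary primitive
`innerPrim b`; its transcendental part is a multiple of `arctan (a / c)`. At the lower limit
`a / c = 1/√2`, and at the upper limit `c = √2 b`, so the inner integral is the explicit function
`innerValue b` (for `b > 0`; at `b = 0` the integrand is singular at `a = 1`, but one point does not
matter).

For the integral in `b`, put `q = √(1 - 3b²)`. The factor `π/2 - arctan (√2 b / q) - arctan (1/√2)`
is removed by parts: its coefficient is a polynomial with primitive `-11b/8 + 3b³/8`, and the
derivative of the arctangent is `√2 / (q (1 - b²))`. The boundary terms vanish at both ends, and what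
remains has the primitive `(√2/8) q + arctan (q/√2)`. This gives the primitive `outerPrim`. The
arcsine terms evaluate to `π√6/12`, the algebraic terms to `-√2/4`, and
`arctan (1/(2√2)) - arctan (1/√2) = -arctan (√2/5)`.
-/

open Real

noncomputable section

/-- A primitive in `a` of the integrand of `I₁`, for fixed `b`. -/
def innerPrim (b a : ℝ) : ℝ :=
  (-(1 / 4) - 9 / 8 * (1 - b ^ 2)) * arctan (a / sqrt (1 - a ^ 2 - b ^ 2))
    - 2 * sqrt (1 - a ^ 2 - b ^ 2) + 3 / 8 * (a * sqrt (1 - a ^ 2 - b ^ 2))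
    + sqrt 2 * a - 3 * sqrt 2 / 4 * a ^ 2

/-- The value of the inner integral of `I₁` for `0 < b ≤ 1/2`. -/
def innerValue (b : ℝ) : ℝ :=
  (-(1 / 4) - 9 / 8 * (1 - b ^ 2)) *
      (π / 2 - arctan (sqrt 2 * b / sqrt (1 - 3 * b ^ 2)) - arctan (1 / sqrt 2))
    - 2 * sqrt 2 * b + sqrt 2 / sqrt 3 * sqrt (1 - b ^ 2)
    + 3 / 8 * (sqrt 2 * b * sqrt (1 - 3 * b ^ 2) - (1 - b ^ 2) * sqrt 2 / 3)
    + sqrt 2 * sqrt (1 - 3 * b ^ 2) - 3 * sqrt 2 / 4 * (2 / 3 - 8 / 3 * b ^ 2)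

/-- A primitive of `innerValue` on `[0, 1/2]`. -/
def outerPrim (b : ℝ) : ℝ :=
  (-(11 / 8) * b + 3 / 8 * b ^ 3) *
      (π / 2 - arctan (sqrt 2 * b / sqrt (1 - 3 * b ^ 2)) - arctan (1 / sqrt 2))
    + sqrt 2 / 8 * sqrt (1 - 3 * b ^ 2) + arctan (sqrt (1 - 3 * b ^ 2) / sqrt 2)
    - sqrt 2 * b ^ 2
    + sqrt 2 / sqrt 3 * (b * sqrt (1 - b ^ 2) / 2 + arcsin b / 2)
    - sqrt 2 / 24 * sqrt (1 - 3 * b ^ 2) ^ 3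
    - sqrt 2 / 8 * (b - b ^ 3 / 3)
    + sqrt 2 * (b * sqrt (1 - 3 * b ^ 2) / 2 + arcsin (sqrt 3 * b) / (2 * sqrt 3))
    - 3 * sqrt 2 / 4 * (2 / 3 * b - 8 / 9 * b ^ 3)

lemma hasDerivAt_innerPrim {a b : ℝ} (h : 0 < 1 - a ^ 2 - b ^ 2) :
    HasDerivAt (innerPrim b)
      ((3 / 4 - 1 / 2 * (a + sqrt (1 - a ^ 2 - b ^ 2) / sqrt 2) ^ 2 -
        (a + sqrt (1 - a ^ 2 - b ^ 2) / sqrt 2 - 1) ^ 2) / sqrt (1 - a ^ 2 - b ^ 2)) a := by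
  have hx : HasDerivAt (fun x : ℝ => x) 1 a := hasDerivAt_id a
  have hc : HasDerivAt (fun x : ℝ => sqrt (1 - x ^ 2 - b ^ 2))
      (-a / sqrt (1 - a ^ 2 - b ^ 2)) a := by
    have h1 : HasDerivAt (fun x : ℝ => 1 - x ^ 2 - b ^ 2) (-(2 * a)) a := by
      simpa using ((hx.pow 2).const_sub 1).sub_const (b ^ 2)
    convert h1.sqrt h.ne' using 1
    have : sqrt (1 - a ^ 2 - b ^ 2) ≠ 0 := (sqrt_pos.2 h).ne'
    field_simp
  have hc0 : 0 < sqrt (1 - a ^ 2 - b ^ 2) := sqrt_pos.2 h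
  have hc2 : sqrt (1 - a ^ 2 - b ^ 2) ^ 2 = 1 - a ^ 2 - b ^ 2 := sq_sqrt h.le
  have hA := (hx.div hc hc0.ne').arctan
  have key := ((((hA.const_mul (-(1 / 4) - 9 / 8 * (1 - b ^ 2))).sub (hc.const_mul 2)).add
    ((hx.mul hc).const_mul (3 / 8))).add (hx.const_mul (sqrt 2))).sub
    ((hx.pow 2).const_mul (3 * sqrt 2 / 4))
  refine key.congr_deriv ?_
  have h2 : sqrt 2 ^ 2 = 2 := sq_sqrt (by norm_num)
  have h20 : 0 < sqrt 2 := by positivity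
  simp only [Pi.div_apply]
  generalize sqrt (1 - a ^ 2 - b ^ 2) = c at *
  generalize sqrt 2 = s at *
  have hb : b ^ 2 = 1 - a ^ 2 - c ^ 2 := by linarith
  have hac : a ^ 2 + c ^ 2 ≠ 0 := by positivity
  have e1 : 1 / (1 + (a / c) ^ 2) * ((1 * c - a * (-a / c)) / c ^ 2) = 1 / c := by
    have : c ^ 2 + a ^ 2 ≠ 0 := by positivity
    field_simp
    ring
  have e2 : c / s = c * s / 2 := by
    field_simp
    linarith
  rw [e1, e2, hb]
  field_simp
  ring_nf
  simp only [h2]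
  ring

lemma inner_integral {b : ℝ} (hb0 : 0 < b) (hb1 : b ≤ 1 / 2) :
    (∫ a in (sqrt ((1 - b ^ 2) / 3))..(sqrt (1 - 3 * b ^ 2)),
        (3 / 4 - 1 / 2 * (a + sqrt (1 - a ^ 2 - b ^ 2) / sqrt 2) ^ 2 -
            (a + sqrt (1 - a ^ 2 - b ^ 2) / sqrt 2 - 1) ^ 2) / sqrt (1 - a ^ 2 - b ^ 2))
      = innerValue b := by
  have hbb : b ^ 2 ≤ 1 / 4 := by nlinarith
  have hbp : 0 < b ^ 2 := by positivity
  have hle : sqrt ((1 - b ^ 2) / 3) ≤ sqrt (1 - 3 * b ^ 2) := sqrt_le_sqrt (by linarith)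
  have hpos : ∀ a ∈ Set.uIcc (sqrt ((1 - b ^ 2) / 3)) (sqrt (1 - 3 * b ^ 2)),
      0 < 1 - a ^ 2 - b ^ 2 := by
    intro a ha
    rw [Set.uIcc_of_le hle] at ha
    have h0 : 0 ≤ a := (sqrt_nonneg _).trans ha.1
    have h1 : a ^ 2 ≤ 1 - 3 * b ^ 2 := (le_sqrt h0 (by linarith)).1 ha.2
    linarith
  rw [intervalIntegral.integral_eq_sub_of_hasDerivAt
    (fun a ha => hasDerivAt_innerPrim (hpos a ha))]
  · have h2 : sqrt 2 ^ 2 = 2 := sq_sqrt (by norm_num)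
    have h3 : sqrt 3 ^ 2 = 3 := sq_sqrt (by norm_num)
    have h20 : 0 < sqrt 2 := by positivity
    have h30 : 0 < sqrt 3 := by positivity
    have hR2 : sqrt (1 - b ^ 2) ^ 2 = 1 - b ^ 2 := sq_sqrt (by linarith)
    have hR0 : 0 < sqrt (1 - b ^ 2) := sqrt_pos.2 (by linarith)
    have hq2 : sqrt (1 - 3 * b ^ 2) ^ 2 = 1 - 3 * b ^ 2 := sq_sqrt (by linarith)
    have hq0 : 0 < sqrt (1 - 3 * b ^ 2) := sqrt_pos.2 (by linarith)
    have ha1 : sqrt ((1 - b ^ 2) / 3) = sqrt (1 - b ^ 2) / sqrt 3 :=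
      sqrt_div (by linarith) 3
    have hc1 : sqrt (1 - (sqrt (1 - b ^ 2) / sqrt 3) ^ 2 - b ^ 2)
        = sqrt 2 * sqrt (1 - b ^ 2) / sqrt 3 := by
      rw [sqrt_eq_iff_mul_self_eq_of_pos (by positivity)]
      rw [← sq, div_pow, div_pow, mul_pow, h2, h3, hR2]
      ring
    have hc2 : sqrt (1 - sqrt (1 - 3 * b ^ 2) ^ 2 - b ^ 2) = sqrt 2 * b := by
      rw [sqrt_eq_iff_mul_self_eq_of_pos (by positivity)]
      rw [← sq, mul_pow, h2, hq2]
      ring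
    unfold innerPrim innerValue
    rw [ha1, hc1, hc2]
    have hA1 : sqrt (1 - b ^ 2) / sqrt 3 / (sqrt 2 * sqrt (1 - b ^ 2) / sqrt 3)
        = 1 / sqrt 2 := by field_simp
    have hA2 : arctan (sqrt (1 - 3 * b ^ 2) / (sqrt 2 * b))
        = π / 2 - arctan (sqrt 2 * b / sqrt (1 - 3 * b ^ 2)) := by
      rw [← arctan_inv_of_pos (by positivity), inv_div]
    rw [hA1, hA2]
    have e1 : (sqrt (1 - b ^ 2) / sqrt 3) ^ 2 = (1 - b ^ 2) / 3 := by
      rw [div_pow, h3, hR2]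
    have e2 : sqrt (1 - b ^ 2) / sqrt 3 * (sqrt 2 * sqrt (1 - b ^ 2) / sqrt 3)
        = sqrt 2 * ((1 - b ^ 2) / 3) := by
      rw [← e1]; ring
    rw [e2, e1, hq2]
    ring
  · apply ContinuousOn.intervalIntegrable
    apply ContinuousOn.div
    · fun_prop
    · fun_prop
    · intro a ha
      exact (sqrt_pos.2 (hpos a ha)).ne'

lemma hasDerivAt_outerPrim {b : ℝ} (hb : b ^ 2 ≤ 1 / 4) :
    HasDerivAt outerPrim (innerValue b) b := by
  have hx : HasDerivAt (fun x : ℝ => x) 1 b := hasDerivAt_id b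
  have hq0 : 0 < sqrt (1 - 3 * b ^ 2) := sqrt_pos.2 (by linarith)
  have hR0 : 0 < sqrt (1 - b ^ 2) := sqrt_pos.2 (by linarith)
  have hq2 : sqrt (1 - 3 * b ^ 2) ^ 2 = 1 - 3 * b ^ 2 := sq_sqrt (by linarith)
  have hR2 : sqrt (1 - b ^ 2) ^ 2 = 1 - b ^ 2 := sq_sqrt (by linarith)
  have h2 : sqrt 2 ^ 2 = 2 := sq_sqrt (by norm_num)
  have h3 : sqrt 3 ^ 2 = 3 := sq_sqrt (by norm_num)
  have h20 : 0 < sqrt 2 := by positivity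
  have h30 : 0 < sqrt 3 := by positivity
  have hR : HasDerivAt (fun x : ℝ => sqrt (1 - x ^ 2)) (-b / sqrt (1 - b ^ 2)) b := by
    have h1 : HasDerivAt (fun x : ℝ => 1 - x ^ 2) (-(2 * b)) b := by
      simpa using (hx.pow 2).const_sub 1
    convert h1.sqrt (by linarith) using 1
    field_simp
  have hq : HasDerivAt (fun x : ℝ => sqrt (1 - 3 * x ^ 2))
      (-(3 * b) / sqrt (1 - 3 * b ^ 2)) b := by
    have h1 : HasDerivAt (fun x : ℝ => 1 - 3 * x ^ 2) (-(3 * (2 * b))) b := by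
      simpa using ((hx.pow 2).const_mul 3).const_sub 1
    convert h1.sqrt (by linarith) using 1
    field_simp
  have hB : HasDerivAt (fun x : ℝ => arctan (sqrt 2 * x / sqrt (1 - 3 * x ^ 2)))
      (sqrt 2 / (sqrt (1 - 3 * b ^ 2) * (1 - b ^ 2))) b := by
    refine ((hx.const_mul (sqrt 2)).div hq hq0.ne').arctan.congr_deriv ?_
    have hb1 : 1 - b ^ 2 ≠ 0 := by nlinarith
    have e : 1 + (sqrt 2 * b / sqrt (1 - 3 * b ^ 2)) ^ 2
        = (1 - b ^ 2) / sqrt (1 - 3 * b ^ 2) ^ 2 := by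
      rw [div_pow, mul_pow, h2]
      generalize sqrt (1 - 3 * b ^ 2) = q at hq0 hq2 ⊢
      field_simp
      rw [hq2]; ring
    simp only [Pi.div_apply]
    rw [e]
    generalize sqrt (1 - 3 * b ^ 2) = q at hq0 hq2 ⊢
    field_simp
    rw [hq2]; ring
  have hD : HasDerivAt (fun x : ℝ => arctan (sqrt (1 - 3 * x ^ 2) / sqrt 2))
      (-(sqrt 2 * b) / (sqrt (1 - 3 * b ^ 2) * (1 - b ^ 2))) b := by
    refine (hq.div_const (sqrt 2)).arctan.congr_deriv ?_
    have hb1 : 1 - b ^ 2 ≠ 0 := by nlinarith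
    have e : 1 + (sqrt (1 - 3 * b ^ 2) / sqrt 2) ^ 2 = 3 * (1 - b ^ 2) / sqrt 2 ^ 2 := by
      rw [div_pow, h2, hq2]; ring
    rw [e]
    field_simp
  have hS1 : HasDerivAt arcsin (1 / sqrt (1 - b ^ 2)) b := by
    apply hasDerivAt_arcsin <;> rintro rfl <;> norm_num at hb
  have hS2 : HasDerivAt (fun x : ℝ => arcsin (sqrt 3 * x)) (sqrt 3 / sqrt (1 - 3 * b ^ 2)) b := by
    have hsq : (sqrt 3 * b) ^ 2 = 3 * b ^ 2 := by rw [mul_pow, h3]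
    have h1 : HasDerivAt arcsin (1 / sqrt (1 - (sqrt 3 * b) ^ 2)) (sqrt 3 * b) := by
      apply hasDerivAt_arcsin <;> intro h <;> rw [h] at hsq <;> linarith
    refine (h1.comp b (hx.const_mul (sqrt 3))).congr_deriv ?_
    rw [hsq]; ring
  have key := (((((((((hx.const_mul (-(11 / 8))).add ((hx.pow 3).const_mul (3 / 8))).mul
    ((hB.const_sub (π / 2)).sub_const (arctan (1 / sqrt 2)))).add
    (hq.const_mul (sqrt 2 / 8))).add hD).sub ((hx.pow 2).const_mul (sqrt 2))).add
    ((((hx.mul hR).div_const 2).add (hS1.div_const 2)).const_mul (sqrt 2 / sqrt 3))).sub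
    ((hq.pow 3).const_mul (sqrt 2 / 24))).sub
    ((hx.sub ((hx.pow 3).div_const 3)).const_mul (sqrt 2 / 8))).add
    ((((hx.mul hq).div_const 2).add (hS2.div_const (2 * sqrt 3))).const_mul (sqrt 2)) |>.sub
    (((hx.const_mul (2 / 3)).sub ((hx.pow 3).const_mul (8 / 9))).const_mul (3 * sqrt 2 / 4))
  refine key.congr_deriv ?_
  have hb1 : 1 - b ^ 2 ≠ 0 := by nlinarith
  unfold innerValue
  simp only [Pi.add_apply, Pi.pow_apply]
  -- `e1`, `e2`: the primitives of `R = √(1 - b²)` and `q = √(1 - 3b²)`; `e3`: the integration by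
  -- parts; `e4`: the primitive of `b q`.
  have e1 : (1 * sqrt (1 - b ^ 2) + b * (-b / sqrt (1 - b ^ 2))) / 2 + 1 / sqrt (1 - b ^ 2) / 2
      = sqrt (1 - b ^ 2) := by
    field_simp
    rw [hR2]; ring
  have e2 : (1 * sqrt (1 - 3 * b ^ 2) + b * (-(3 * b) / sqrt (1 - 3 * b ^ 2))) / 2
      + sqrt 3 / sqrt (1 - 3 * b ^ 2) / (2 * sqrt 3) = sqrt (1 - 3 * b ^ 2) := by
    field_simp
    rw [hq2]; ring
  have e3 : (-(11 / 8) * b + 3 / 8 * b ^ 3) * (-(sqrt 2 / (sqrt (1 - 3 * b ^ 2) * (1 - b ^ 2))))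
      + sqrt 2 / 8 * (-(3 * b) / sqrt (1 - 3 * b ^ 2))
      + -(sqrt 2 * b) / (sqrt (1 - 3 * b ^ 2) * (1 - b ^ 2)) = 0 := by
    field_simp
    ring
  have e4 : sqrt (1 - 3 * b ^ 2) ^ 2 * (-(3 * b) / sqrt (1 - 3 * b ^ 2))
      = -(3 * b) * sqrt (1 - 3 * b ^ 2) := by
    field_simp
  rw [e1, e2]
  norm_num
  linear_combination e3 - sqrt 2 / 8 * e4

lemma arctan_sub_eq :
    arctan (1 / 2 / sqrt 2) - arctan (1 / sqrt 2) = -arctan (sqrt 2 / 5) := by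
  have h2 : sqrt 2 ^ 2 = 2 := sq_sqrt (by norm_num)
  have h20 : 0 < sqrt 2 := by positivity
  have e : 1 / 2 / sqrt 2 = sqrt 2 / 4 := by field_simp; linarith
  have e' : 1 / sqrt 2 = (sqrt 2 / 4 + sqrt 2 / 5) / (1 - sqrt 2 / 4 * (sqrt 2 / 5)) := by
    have : 1 - sqrt 2 / 4 * (sqrt 2 / 5) = 9 / 10 := by linear_combination (-1 / 20) * h2
    rw [this]
    field_simp
    linarith
  rw [e, e', ← arctan_add (by nlinarith)]
  ring

/-- the evaluation of the double integral `I₁` from the computation of the volume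
of `U_3`: with `c = √(1 − a² − b²)`,
`∫₀^{1/2} ∫_{√((1−b²)/3)}^{√(1−3b²)} (3/4 − (1/2)(a + c/√2)² − (a + c/√2 − 1)²)/√(1−a²−b²) da db
  = (π√6 − 3√2)/12 − arctan(√2/5)`. -/
theorem integral_I1 :
    (∫ b in (0:ℝ)..(1/2), ∫ a in (sqrt ((1 - b ^ 2) / 3))..(sqrt (1 - 3 * b ^ 2)),
        (3 / 4 - 1 / 2 * (a + sqrt (1 - a ^ 2 - b ^ 2) / sqrt 2) ^ 2 -
            (a + sqrt (1 - a ^ 2 - b ^ 2) / sqrt 2 - 1) ^ 2) / sqrt (1 - a ^ 2 - b ^ 2))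
      = (π * sqrt 6 - 3 * sqrt 2) / 12 - arctan (sqrt 2 / 5) := by
  have hcongr := intervalIntegral.integral_congr_ae (μ := MeasureTheory.volume)
    (a := (0:ℝ)) (b := 1 / 2) (g := innerValue)
    (f := fun b => ∫ a in (sqrt ((1 - b ^ 2) / 3))..(sqrt (1 - 3 * b ^ 2)),
        (3 / 4 - 1 / 2 * (a + sqrt (1 - a ^ 2 - b ^ 2) / sqrt 2) ^ 2 -
            (a + sqrt (1 - a ^ 2 - b ^ 2) / sqrt 2 - 1) ^ 2) / sqrt (1 - a ^ 2 - b ^ 2))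
    (Filter.Eventually.of_forall fun b hb => by
      rw [Set.uIoc_of_le (by norm_num)] at hb
      exact inner_integral hb.1 hb.2)
  have hsq : ∀ b ∈ Set.uIcc (0:ℝ) (1 / 2), b ^ 2 ≤ 1 / 4 := by
    intro b hb
    rw [Set.uIcc_of_le (by norm_num)] at hb
    nlinarith [hb.1, hb.2]
  rw [hcongr, intervalIntegral.integral_eq_sub_of_hasDerivAt
    (fun b hb => hasDerivAt_outerPrim (hsq b hb))]
  · have h2 : sqrt 2 ^ 2 = 2 := sq_sqrt (by norm_num)
    have h3 : sqrt 3 ^ 2 = 3 := sq_sqrt (by norm_num)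
    have h20 : 0 < sqrt 2 := by positivity
    have h30 : 0 < sqrt 3 := by positivity
    have h6 : sqrt 6 = sqrt 2 * sqrt 3 := by
      rw [← sqrt_mul (by norm_num)]; norm_num
    have hq : sqrt (1 - 3 * (1 / 2) ^ 2) = 1 / 2 := by
      rw [sqrt_eq_iff_mul_self_eq_of_pos (by norm_num)]; norm_num
    have hR : sqrt (1 - (1 / 2) ^ 2) = sqrt 3 / 2 := by
      rw [sqrt_eq_iff_mul_self_eq_of_pos (by positivity)]; nlinarith
    have hs1 : arcsin (1 / 2) = π / 6 := by
      rw [← sin_pi_div_six]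
      exact arcsin_sin (by linarith [pi_pos]) (by linarith [pi_pos])
    have hs2 : arcsin (sqrt 3 * (1 / 2)) = π / 3 := by
      rw [mul_one_div, ← sin_pi_div_three]
      exact arcsin_sin (by linarith [pi_pos]) (by linarith [pi_pos])
    -- The boundary term of the integration by parts vanishes at `1/2`.
    have hA : π / 2 - arctan (sqrt 2 * (1 / 2) / (1 / 2)) - arctan (1 / sqrt 2) = 0 := by
      rw [one_div (sqrt 2), arctan_inv_of_pos h20, mul_div_cancel_right₀ _ (by norm_num)]
      ring
    unfold outerPrim
    rw [hq, hR, hs1, hs2, hA]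
    have hz : sqrt (1 - 3 * (0:ℝ) ^ 2) = 1 := by norm_num
    have hz' : sqrt (1 - (0:ℝ) ^ 2) = 1 := by norm_num
    rw [hz, hz', mul_zero (sqrt 3), arcsin_zero, h6]
    have e : sqrt 2 / sqrt 3 = sqrt 2 * sqrt 3 / 3 := by
      field_simp; linarith
    have e' : π / 3 / (2 * sqrt 3) = π * sqrt 3 / 18 := by
      field_simp; linarith
    rw [e, e']
    linear_combination arctan_sub_eq + sqrt 2 / 24 * h3
  · apply ContinuousOn.intervalIntegrable
    have hne : ∀ b ∈ Set.uIcc (0:ℝ) (1 / 2), sqrt (1 - 3 * b ^ 2) ≠ 0 := fun b hb =>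
      (sqrt_pos.2 (by linarith [hsq b hb])).ne'
    have hdiv : ContinuousOn (fun b : ℝ => sqrt 2 * b / sqrt (1 - 3 * b ^ 2))
        (Set.uIcc (0:ℝ) (1 / 2)) := ContinuousOn.div (by fun_prop) (by fun_prop) hne
    have hat := continuous_arctan.comp_continuousOn hdiv
    simp only [Function.comp_def] at hat
    unfold innerValue
    fun_prop
end
end

section
/- The following integral identity holds: ∫₀^{1/2} ∫_b^{√((1−b²)/3)} √( (1 + a² − b²) / (1 − a² − b²) ) da db = (1/4)·arctan(1/√8) + ∫₀^{1/√3} √((1+a²)/(1−a²)) · arctan( a / (√(1+a²) + 1) ) da. -/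
/-!
Put `g u = √((1 + u²) / (1 - u²))`, `c = 1 / √3` and `w b = b / √(1 - b²)`. The substitution
`a = √(1 - b²) u` turns the inner integral into `√(1 - b²) ∫_{w b}^c g`. With
`Φ u = (arctan u + u / (1 + u²)) / 2`, for which `Φ (w b)` is a primitive of `√(1 - b²)`, the function
`b ↦ Φ (w b) ∫_{w b}^c g + ∫_0^{w b} Φ g` is a primitive of the inner integral (`hasDerivAt_primitive`),
so the double integral equals `∫_0^c Φ g`; this replaces the exchange of the order of integration.

Finally `Φ g` splits into `g u · arctan u / 2`, where `arctan u / 2 = arctan (u / (√(1 + u²) + 1))` by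
the half-angle formula, and `u / (2 √(1 - u⁴))`, which has the primitive `arcsin (u²) / 4`; and
`arcsin (1 / 3) = arctan (1 / √8)`.
-/

open Real

noncomputable section

namespace DoubleToSingle

open Set MeasureTheory

/-- The integrand after the substitution `a = √(1 - b²) u`. -/
def g (u : ℝ) : ℝ := √((1 + u ^ 2) / (1 - u ^ 2))

/-- The primitive `∫_0^{u / √(1 + u²)} √(1 - b²) db`, in closed form. -/
def Phi (u : ℝ) : ℝ := (arctan u + u / (1 + u ^ 2)) / 2

/-- The value of `u = a / √(1 - b²)` at the lower limit `a = b` of the inner integral. -/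
def w (b : ℝ) : ℝ := b / √(1 - b ^ 2)

lemma one_sub_sq_pos {u : ℝ} (hu : u ∈ Ioo (-1 : ℝ) 1) : 0 < 1 - u ^ 2 := by
  nlinarith [hu.1, hu.2]

lemma continuousOn_g : ContinuousOn g (Ioo (-1) 1) := by
  unfold g
  refine ContinuousOn.sqrt (ContinuousOn.div (by fun_prop) (by fun_prop) ?_)
  intro u hu
  exact (one_sub_sq_pos hu).ne'

lemma continuous_Phi : Continuous Phi := by
  unfold Phi
  have : ∀ u : ℝ, 1 + u ^ 2 ≠ 0 := fun u => by positivity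
  fun_prop (disch := assumption)

lemma intervalIntegrable_of_Ioo {f : ℝ → ℝ} (hf : ContinuousOn f (Ioo (-1) 1)) {x y : ℝ}
    (hx : x ∈ Ioo (-1 : ℝ) 1) (hy : y ∈ Ioo (-1 : ℝ) 1) : IntervalIntegrable f volume x y :=
  (hf.mono (ordConnected_Ioo.uIcc_subset hx hy)).intervalIntegrable

lemma zero_mem : (0 : ℝ) ∈ Ioo (-1 : ℝ) 1 := by constructor <;> norm_num

lemma hasDerivAt_integral {f : ℝ → ℝ} (hf : ContinuousOn f (Ioo (-1) 1)) {x : ℝ}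
    (hx : x ∈ Ioo (-1 : ℝ) 1) : HasDerivAt (fun x => ∫ t in (0 : ℝ)..x, f t) (f x) x :=
  intervalIntegral.integral_hasDerivAt_right (intervalIntegrable_of_Ioo hf zero_mem hx)
    (hf.stronglyMeasurableAtFilter isOpen_Ioo x hx) (hf.continuousAt (isOpen_Ioo.mem_nhds hx))

lemma hasDerivAt_Phi (u : ℝ) : HasDerivAt Phi (1 / (1 + u ^ 2) ^ 2) u := by
  have h0 : 1 + u ^ 2 ≠ 0 := by positivity
  have h := ((hasDerivAt_arctan u).add ((hasDerivAt_id u).div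
    (((hasDerivAt_id u).pow 2).const_add 1) h0)).div_const 2
  refine HasDerivAt.congr_deriv h ?_
  simp only [Pi.pow_apply, id]
  field_simp
  norm_num
  ring

lemma hasDerivAt_w {b : ℝ} (hb : b ∈ Ioo (-1 : ℝ) 1) :
    HasDerivAt w (1 / √(1 - b ^ 2) ^ 3) b := by
  have hp := one_sub_sq_pos hb
  have hs : √(1 - b ^ 2) ≠ 0 := (sqrt_pos.2 hp).ne'
  have hq := sq_sqrt hp.le
  have h := (hasDerivAt_id b).div ((((hasDerivAt_id b).pow 2).const_sub 1).sqrt hp.ne') hs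
  refine HasDerivAt.congr_deriv h ?_
  simp only [Pi.pow_apply, id]
  field_simp
  norm_num
  nlinarith [hq]

lemma one_add_w_sq {b : ℝ} (hb : b ∈ Ioo (-1 : ℝ) 1) : 1 + w b ^ 2 = 1 / √(1 - b ^ 2) ^ 2 := by
  have hp := one_sub_sq_pos hb
  unfold w
  rw [div_pow, sq_sqrt hp.le]
  field_simp
  ring

lemma w_mem {b : ℝ} (hb : b ∈ Icc (0 : ℝ) (1 / 2)) : w b ∈ Ioo (-1 : ℝ) 1 := by
  have hb' : b ∈ Ioo (-1 : ℝ) 1 := ⟨by linarith [hb.1], by linarith [hb.2]⟩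
  have hp := one_sub_sq_pos hb'
  have h := one_add_w_sq hb'
  rw [sq_sqrt hp.le] at h
  have h2 : 1 / (1 - b ^ 2) < 2 := by
    rw [div_lt_iff₀ hp]; nlinarith [hb.1, hb.2]
  have : w b ^ 2 < 1 := by linarith
  exact abs_lt.1 ((sq_lt_one_iff_abs_lt_one _).1 this)

lemma c_mem : 1 / √3 ∈ Ioo (-1 : ℝ) 1 := by
  have h3 : (1 : ℝ) < √3 := by rw [lt_sqrt] <;> norm_num
  have hpos : (0 : ℝ) < 1 / √3 := by positivity
  refine ⟨by linarith, ?_⟩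
  rw [div_lt_one (by linarith)]
  exact h3

lemma inner_eq {b : ℝ} (hb : b ∈ Icc (0 : ℝ) (1 / 2)) :
    (∫ a in b..(√((1 - b ^ 2) / 3)), √((1 + a ^ 2 - b ^ 2) / (1 - a ^ 2 - b ^ 2))) =
      √(1 - b ^ 2) * ((∫ u in (0 : ℝ)..(1 / √3), g u) - ∫ u in (0 : ℝ)..(w b), g u) := by
  have hb' : b ∈ Ioo (-1 : ℝ) 1 := ⟨by linarith [hb.1], by linarith [hb.2]⟩
  have hp := one_sub_sq_pos hb'
  have hs : √(1 - b ^ 2) ≠ 0 := (sqrt_pos.2 hp).ne'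
  have hq := sq_sqrt hp.le
  rw [intervalIntegral.integral_interval_sub_left
    (intervalIntegrable_of_Ioo continuousOn_g zero_mem c_mem)
    (intervalIntegrable_of_Ioo continuousOn_g zero_mem (w_mem hb))]
  have key : ∀ u : ℝ, g u = (fun a : ℝ => √((1 + a ^ 2 - b ^ 2) / (1 - a ^ 2 - b ^ 2)))
      (√(1 - b ^ 2) * u) := by
    intro u
    simp only [g, mul_pow, hq]
    congr 1
    rw [show 1 + (1 - b ^ 2) * u ^ 2 - b ^ 2 = (1 - b ^ 2) * (1 + u ^ 2) by ring,
      show 1 - (1 - b ^ 2) * u ^ 2 - b ^ 2 = (1 - b ^ 2) * (1 - u ^ 2) by ring,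
      mul_div_mul_left _ _ hp.ne']
  rw [funext key, intervalIntegral.mul_integral_comp_mul_left]
  congr 1
  · unfold w; field_simp
  · rw [sqrt_div hp.le]; ring

lemma hasDerivAt_primitive {b : ℝ} (hb : b ∈ Icc (0 : ℝ) (1 / 2)) :
    HasDerivAt (fun b => Phi (w b) * ((∫ u in (0 : ℝ)..(1 / √3), g u) - ∫ u in (0 : ℝ)..(w b), g u)
        + ∫ u in (0 : ℝ)..(w b), Phi u * g u)
      (√(1 - b ^ 2) * ((∫ u in (0 : ℝ)..(1 / √3), g u) - ∫ u in (0 : ℝ)..(w b), g u)) b := by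
  have hb' : b ∈ Ioo (-1 : ℝ) 1 := ⟨by linarith [hb.1], by linarith [hb.2]⟩
  have hp := one_sub_sq_pos hb'
  have hs : √(1 - b ^ 2) ≠ 0 := (sqrt_pos.2 hp).ne'
  have hw := hasDerivAt_w hb'
  have hG := (hasDerivAt_integral continuousOn_g (w_mem hb)).comp b hw
  have hP := (hasDerivAt_integral (continuous_Phi.continuousOn.mul continuousOn_g)
    (w_mem hb)).comp b hw
  have hF := (hasDerivAt_Phi (w b)).comp b hw
  have h := (hF.mul (hG.const_sub (∫ u in (0 : ℝ)..(1 / √3), g u))).add hP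
  refine HasDerivAt.congr_deriv h ?_
  simp only [Function.comp, one_add_w_sq hb', Pi.mul_apply]
  field_simp
  ring

lemma w_half : w (1 / 2) = 1 / √3 := by
  unfold w
  rw [show (1 : ℝ) - (1 / 2) ^ 2 = 3 / 2 ^ 2 by norm_num, sqrt_div (by norm_num),
    sqrt_sq (by norm_num)]
  field_simp

lemma double_eq : (∫ b in (0 : ℝ)..(1 / 2), ∫ a in b..(√((1 - b ^ 2) / 3)),
    √((1 + a ^ 2 - b ^ 2) / (1 - a ^ 2 - b ^ 2))) = ∫ u in (0 : ℝ)..(1 / √3), Phi u * g u := by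
  have hu : uIcc (0 : ℝ) (1 / 2) = Icc 0 (1 / 2) := uIcc_of_le (by norm_num)
  rw [intervalIntegral.integral_congr (g := fun b => √(1 - b ^ 2) *
    ((∫ u in (0 : ℝ)..(1 / √3), g u) - ∫ u in (0 : ℝ)..(w b), g u))
    (fun b hb => inner_eq (hu ▸ hb))]
  rw [intervalIntegral.integral_eq_sub_of_hasDerivAt
    (fun b hb => hasDerivAt_primitive (hu ▸ hb)) ?_]
  · have h0 : w 0 = 0 := by simp [w]
    rw [w_half, h0]
    simp [Phi]
  · apply ContinuousOn.intervalIntegrable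
    rw [hu]
    intro b hb
    have hb' : b ∈ Ioo (-1 : ℝ) 1 := ⟨by linarith [hb.1], by linarith [hb.2]⟩
    have hG : ContinuousAt (fun b => ∫ u in (0 : ℝ)..(w b), g u) b :=
      ((hasDerivAt_integral continuousOn_g (w_mem hb)).comp b (hasDerivAt_w hb')).continuousAt
    have hr : ContinuousAt (fun b : ℝ => √(1 - b ^ 2)) b := by fun_prop
    exact (hr.mul (continuousAt_const.sub hG)).continuousWithinAt

lemma arctan_half (u : ℝ) : arctan (u / (√(1 + u ^ 2) + 1)) = arctan u / 2 := by
  have hq : √(1 + u ^ 2) ^ 2 = 1 + u ^ 2 := sq_sqrt (by positivity)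
  have hs : 0 < √(1 + u ^ 2) := sqrt_pos.2 (by positivity)
  set s := √(1 + u ^ 2)
  have hlt : |u / (s + 1)| < 1 := by
    rw [← sq_lt_one_iff_abs_lt_one, div_pow, div_lt_one (by positivity)]
    nlinarith
  have h := two_mul_arctan (abs_lt.1 hlt).1 (abs_lt.1 hlt).2
  have e : 2 * (u / (s + 1)) / (1 - (u / (s + 1)) ^ 2) = u := by
    have h1 : 1 - (u / (s + 1)) ^ 2 = 2 / (s + 1) := by
      field_simp
      nlinarith
    rw [h1]
    field_simp
  rw [e] at h
  linarith

lemma hasDerivAt_arcsin_sq {u : ℝ} (hu : u ∈ Ioo (-1 : ℝ) 1) :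
    HasDerivAt (fun u => arcsin (u ^ 2) / 4) (u / (1 + u ^ 2) / 2 * g u) u := by
  have hp := one_sub_sq_pos hu
  have h1 : (0 : ℝ) < 1 + u ^ 2 := by positivity
  have hd := hasDerivAt_arcsin (x := u ^ 2) (by nlinarith) (by nlinarith)
  have h := (HasDerivAt.comp (h := fun x : ℝ => x ^ 2) u hd (hasDerivAt_pow 2 u)).div_const 4
  refine HasDerivAt.congr_deriv h ?_
  have e : √(1 - (u ^ 2) ^ 2) = √(1 + u ^ 2) * √(1 - u ^ 2) := by
    rw [← sqrt_mul h1.le]; congr 1; ring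
  have hA := sqrt_pos.2 hp
  have hB := sqrt_pos.2 h1
  have hq := sq_sqrt h1.le
  rw [e, g, sqrt_div h1.le]
  field_simp
  rw [hq]
  norm_num
  ring

lemma arcsin_third : arcsin ((1 / √3) ^ 2) = arctan (1 / √8) := by
  rw [arctan_eq_arcsin]
  congr 1
  rw [div_pow, div_pow, sq_sqrt (by norm_num), sq_sqrt (by norm_num),
    show (1 : ℝ) + 1 ^ 2 / 8 = 3 ^ 2 / 8 by norm_num, sqrt_div (by norm_num),
    sqrt_sq (by norm_num)]
  field_simp

end DoubleToSingle

open DoubleToSingle in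
/-- the reduction of a double integral to a single integral from the computation
of the volume of `U_3`. -/
theorem integral_double_to_single :
    (∫ b in (0:ℝ)..(1/2), ∫ a in b..(sqrt ((1 - b ^ 2) / 3)),
        sqrt ((1 + a ^ 2 - b ^ 2) / (1 - a ^ 2 - b ^ 2)))
      = 1 / 4 * arctan (1 / sqrt 8) +
        ∫ a in (0:ℝ)..(1 / sqrt 3),
          sqrt ((1 + a ^ 2) / (1 - a ^ 2)) * arctan (a / (sqrt (1 + a ^ 2) + 1)) := by
  rw [double_eq]
  have hc1 : ContinuousOn (fun u => u / (1 + u ^ 2) / 2 * g u) (Set.Ioo (-1) 1) := by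
    have : ∀ u : ℝ, 1 + u ^ 2 ≠ 0 := fun u => by positivity
    exact ContinuousOn.mul (Continuous.continuousOn (by fun_prop (disch := assumption)))
      continuousOn_g
  have hc2 : ContinuousOn (fun u => g u * (arctan u / 2)) (Set.Ioo (-1) 1) :=
    continuousOn_g.mul (Continuous.continuousOn (by fun_prop))
  have hi1 := intervalIntegrable_of_Ioo hc1 zero_mem c_mem
  have hi2 := intervalIntegrable_of_Ioo hc2 zero_mem c_mem
  have hsplit : ∀ u, Phi u * g u = u / (1 + u ^ 2) / 2 * g u + g u * (arctan u / 2) := by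
    intro u; unfold Phi; ring
  simp_rw [hsplit, arctan_half]
  rw [intervalIntegral.integral_add hi1 hi2,
    intervalIntegral.integral_eq_sub_of_hasDerivAt (fun u hu => hasDerivAt_arcsin_sq
      (Set.ordConnected_Ioo.uIcc_subset zero_mem c_mem hu)) hi1, arcsin_third]
  simp only [g]
  norm_num
  ring
end
end
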